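/- Let ρ be a probability measure on ℝ with finite second moment, mean 0 (∫ x dρ = 0) and unit second moment (∫ x² dρ = 1). For real numbers m₁, m₂ and s₁, s₂ ≥ 0, let μᵢ be the pushforward of ρ under the map x ↦ mᵢ + sᵢ·x (i = 1, 2). Then W_2(μ₁, μ₂) = sqrt((m₁ − m₂)² + (s₁ − s₂)²). -/

import Mathlib

open MeasureTheory ProbabilityTheory Filter
open scoped ENNReal NNReal

/-- The Wasserstein-`p` distance between two measures on `ℝ`:
the infimum over all couplings `γ` (probability measures on `ℝ × ℝ` with first marginal `μ`
and second marginal `ν`) of `∫ |x₁ - x₂|^p dγ`, raised to the power `1/p`. -/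
noncomputable def wassersteinDist (p : ℝ) (μ ν : Measure ℝ) : ℝ≥0∞ :=
  (⨅ (γ : Measure (ℝ × ℝ)) (_ : IsProbabilityMeasure γ)
      (_ : γ.map Prod.fst = μ) (_ : γ.map Prod.snd = ν),
    ∫⁻ x, ENNReal.ofReal (|x.1 - x.2| ^ p) ∂γ) ^ (1 / p)

/-!
For random variables `X`, `Y` on one probability space,
`𝔼(X - Y)² = (𝔼X - 𝔼Y)² + Var X + Var Y - 2 Cov(X, Y)`, and the covariance is the only term that
depends on the coupling. By Cauchy-Schwarz it is at most `√(Var X) √(Var Y)`, so every coupling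
costs at least `(𝔼X - 𝔼Y)² + (√(Var X) - √(Var Y))²` (Gelbrich's bound), and a perfectly correlated
coupling is optimal. Two affine functions of one random variable whose slopes have the same sign
are perfectly correlated.
-/

section Moments

variable {Ω : Type*} {mΩ : MeasurableSpace Ω} {P : Measure Ω} {X Y : Ω → ℝ}

lemma covariance_le_sqrt_variance_mul_sqrt_variance [IsFiniteMeasure P]
    (hX : MemLp X 2 P) (hY : MemLp Y 2 P) :
    cov[X, Y; P] ≤ √Var[X; P] * √Var[Y; P] := by
  have hquad (t : ℝ) : 0 ≤ Var[Y; P] * (t * t) + 2 * cov[X, Y; P] * t + Var[X; P] := by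
    have hvar := variance_add hX (hY.const_smul t)
    rw [variance_smul, covariance_smul_right] at hvar
    linarith [variance_nonneg (X + t • Y) P]
  have hdiscrim := discrim_le_zero hquad
  rw [← Real.sqrt_mul (variance_nonneg X P)]
  apply Real.le_sqrt_of_sq_le
  rw [discrim] at hdiscrim
  linarith

lemma integral_sq_sub_eq [IsProbabilityMeasure P] (hX : MemLp X 2 P) (hY : MemLp Y 2 P) :
    ∫ ω, (X ω - Y ω) ^ 2 ∂P = (P[X] - P[Y]) ^ 2 + (√Var[X; P] - √Var[Y; P]) ^ 2 +
      2 * (√Var[X; P] * √Var[Y; P] - cov[X, Y; P]) := by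
  have hmean : P[X - Y] = P[X] - P[Y] :=
    integral_sub (hX.integrable one_le_two) (hY.integrable one_le_two)
  have hvar : Var[X - Y; P] = ∫ ω, (X ω - Y ω) ^ 2 ∂P - P[X - Y] ^ 2 :=
    variance_eq_sub (hX.sub hY)
  rw [variance_sub hX hY, hmean] at hvar
  linarith [Real.sq_sqrt (variance_nonneg X P), Real.sq_sqrt (variance_nonneg Y P)]

lemma memLp_two_of_lintegral_abs_rpow_two_lt_top (hX : AEStronglyMeasurable X P)
    (h : ∫⁻ ω, ENNReal.ofReal (|X ω| ^ (2 : ℝ)) ∂P < ⊤) : MemLp X 2 P :=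
  (memLp_two_iff_integrable_sq hX).2
    ⟨hX.pow 2, by simpa [hasFiniteIntegral_iff_norm] using h⟩

lemma lintegral_abs_sub_rpow_two_rpow_one_half (hX : MemLp X 2 P) (hY : MemLp Y 2 P) :
    (∫⁻ ω, ENNReal.ofReal (|X ω - Y ω| ^ (2 : ℝ)) ∂P) ^ (1 / 2 : ℝ) =
      ENNReal.ofReal √(∫ ω, (X ω - Y ω) ^ 2 ∂P) := by
  have hint : Integrable (fun ω => (X ω - Y ω) ^ 2) P := (hX.sub hY).integrable_sq
  simp only [Real.rpow_two, sq_abs]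
  rw [← ofReal_integral_eq_lintegral_ofReal hint (ae_of_all _ fun ω => sq_nonneg _),
    Real.sqrt_eq_rpow, ENNReal.ofReal_rpow_of_nonneg (by positivity) (by positivity)]

end Moments

section Wasserstein

variable {p : ℝ} {μ ν : Measure ℝ} {Ω : Type*} {mΩ : MeasurableSpace Ω} {P : Measure Ω}
  {X Y : Ω → ℝ}

lemma le_wassersteinDist (hp : 0 < p) {c : ℝ≥0∞}
    (h : ∀ γ : Measure (ℝ × ℝ), IsProbabilityMeasure γ → γ.map Prod.fst = μ →
      γ.map Prod.snd = ν → c ≤ (∫⁻ x, ENNReal.ofReal (|x.1 - x.2| ^ p) ∂γ) ^ (1 / p)) :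
    c ≤ wassersteinDist p μ ν := by
  simp only [wassersteinDist, one_div, ENNReal.le_rpow_inv_iff hp] at h ⊢
  exact le_iInf₂ fun γ hγ => le_iInf₂ fun hfst hsnd => h γ hγ hfst hsnd

lemma wassersteinDist_map_map_le [IsProbabilityMeasure P] (hp : 0 ≤ p)
    (hX : AEMeasurable X P) (hY : AEMeasurable Y P) :
    wassersteinDist p (P.map X) (P.map Y) ≤
      (∫⁻ ω, ENNReal.ofReal (|X ω - Y ω| ^ p) ∂P) ^ (1 / p) := by
  have hXY : AEMeasurable (fun ω => (X ω, Y ω)) P := hX.prodMk hY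
  have hcost : ∫⁻ x, ENNReal.ofReal (|x.1 - x.2| ^ p) ∂P.map (fun ω => (X ω, Y ω)) =
      ∫⁻ ω, ENNReal.ofReal (|X ω - Y ω| ^ p) ∂P :=
    lintegral_map' (by fun_prop) hXY
  rw [wassersteinDist]
  gcongr
  exact iInf₂_le_of_le _ (Measure.isProbabilityMeasure_map hXY) <|
    iInf₂_le_of_le (AEMeasurable.map_map_of_aemeasurable (by fun_prop) hXY)
      (AEMeasurable.map_map_of_aemeasurable (by fun_prop) hXY) hcost.le

theorem gelbrichBound_le_wassersteinDist_two (hμ : MemLp id 2 μ) (hν : MemLp id 2 ν) :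
    ENNReal.ofReal √((μ[id] - ν[id]) ^ 2 + (√Var[id; μ] - √Var[id; ν]) ^ 2) ≤
      wassersteinDist 2 μ ν := by
  refine le_wassersteinDist two_pos ?_
  rintro γ hγ rfl rfl
  have hfst : AEMeasurable Prod.fst γ := measurable_fst.aemeasurable
  have hsnd : AEMeasurable Prod.snd γ := measurable_snd.aemeasurable
  have hX : MemLp Prod.fst 2 γ := hμ.comp_of_map hfst
  have hY : MemLp Prod.snd 2 γ := hν.comp_of_map hsnd
  rw [lintegral_abs_sub_rpow_two_rpow_one_half hX hY, variance_id_map hfst, variance_id_map hsnd,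
    integral_map hfst aestronglyMeasurable_id, integral_map hsnd aestronglyMeasurable_id]
  gcongr
  simp only [id_eq]
  linarith [integral_sq_sub_eq hX hY, covariance_le_sqrt_variance_mul_sqrt_variance hX hY]

theorem wassersteinDist_two_map_map_of_covariance_eq [IsProbabilityMeasure P]
    (hX : MemLp X 2 P) (hY : MemLp Y 2 P) (hcov : cov[X, Y; P] = √Var[X; P] * √Var[Y; P]) :
    wassersteinDist 2 (P.map X) (P.map Y) =
      ENNReal.ofReal √(∫ ω, (X ω - Y ω) ^ 2 ∂P) := by
  apply le_antisymm
  · rw [← lintegral_abs_sub_rpow_two_rpow_one_half hX hY]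
    exact wassersteinDist_map_map_le zero_le_two hX.aemeasurable hY.aemeasurable
  · have memLp_id_map {Z : Ω → ℝ} (hZ : MemLp Z 2 P) : MemLp id 2 (P.map Z) :=
      (memLp_map_measure_iff aestronglyMeasurable_id hZ.aemeasurable).2 hZ
    have hbound := gelbrichBound_le_wassersteinDist_two (memLp_id_map hX) (memLp_id_map hY)
    rw [variance_id_map hX.aemeasurable, variance_id_map hY.aemeasurable,
      integral_map hX.aemeasurable aestronglyMeasurable_id,
      integral_map hY.aemeasurable aestronglyMeasurable_id] at hbound
    rwa [integral_sq_sub_eq hX hY, hcov, sub_self, mul_zero, add_zero]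

end Wasserstein

section LocationScale

variable {Ω : Type*} {mΩ : MeasurableSpace Ω} {P : Measure Ω} {X : Ω → ℝ}

lemma memLp_add_mul [IsFiniteMeasure P] {p : ℝ≥0∞} (hX : MemLp X p P) (m s : ℝ) :
    MemLp (fun ω => m + s * X ω) p P :=
  (memLp_const m).add (hX.const_mul s)

lemma variance_add_mul [IsProbabilityMeasure P] (hX : AEStronglyMeasurable X P) (m s : ℝ) :
    Var[fun ω => m + s * X ω; P] = s ^ 2 * Var[X; P] := by
  rw [variance_const_add (hX.const_mul s), variance_const_mul]

lemma covariance_add_mul_add_mul [IsProbabilityMeasure P] (hX : Integrable X P)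
    (m₁ m₂ s₁ s₂ : ℝ) :
    cov[fun ω => m₁ + s₁ * X ω, fun ω => m₂ + s₂ * X ω; P] = s₁ * s₂ * Var[X; P] := by
  rw [covariance_const_add_left (hX.const_mul s₁), covariance_const_add_right (hX.const_mul s₂),
    covariance_const_mul_left, covariance_const_mul_right, covariance_self hX.aemeasurable,
    mul_assoc]

lemma covariance_add_mul_add_mul_eq_sqrt_mul_sqrt [IsProbabilityMeasure P]
    (hX : Integrable X P) (m₁ m₂ : ℝ) {s₁ s₂ : ℝ} (hs : 0 ≤ s₁ * s₂) :
    cov[fun ω => m₁ + s₁ * X ω, fun ω => m₂ + s₂ * X ω; P] =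
      √Var[fun ω => m₁ + s₁ * X ω; P] * √Var[fun ω => m₂ + s₂ * X ω; P] := by
  have hXm := hX.aestronglyMeasurable
  have hnonneg : 0 ≤ s₁ * s₂ * Var[X; P] := mul_nonneg hs (variance_nonneg X P)
  calc
    cov[fun ω => m₁ + s₁ * X ω, fun ω => m₂ + s₂ * X ω; P] = s₁ * s₂ * Var[X; P] :=
      covariance_add_mul_add_mul hX m₁ m₂ s₁ s₂
    _ = √((s₁ * s₂ * Var[X; P]) ^ 2) := (Real.sqrt_sq hnonneg).symm
    _ = √(Var[fun ω => m₁ + s₁ * X ω; P] * Var[fun ω => m₂ + s₂ * X ω; P]) := by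
      rw [variance_add_mul hXm, variance_add_mul hXm]
      ring_nf
    _ = √Var[fun ω => m₁ + s₁ * X ω; P] * √Var[fun ω => m₂ + s₂ * X ω; P] :=
      Real.sqrt_mul (variance_nonneg _ P) _

lemma integral_add_mul [IsProbabilityMeasure P] (hX : Integrable X P) (m s : ℝ) :
    ∫ ω, (m + s * X ω) ∂P = m + s * P[X] := by
  simp [integral_add (integrable_const m) (hX.const_mul s), integral_const_mul]

lemma integral_sq_add_mul [IsProbabilityMeasure P] (hX : MemLp X 2 P) (m s : ℝ) :
    ∫ ω, (m + s * X ω) ^ 2 ∂P = (m + s * P[X]) ^ 2 + s ^ 2 * Var[X; P] := by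
  have hvar : Var[fun ω => m + s * X ω; P] =
      ∫ ω, (m + s * X ω) ^ 2 ∂P - (∫ ω, (m + s * X ω) ∂P) ^ 2 :=
    variance_eq_sub (memLp_add_mul hX m s)
  rw [variance_add_mul hX.aestronglyMeasurable,
    integral_add_mul (hX.integrable one_le_two)] at hvar
  linarith

theorem wasserstein2_locationScale_general [IsProbabilityMeasure P] (hX : MemLp X 2 P)
    (m₁ m₂ : ℝ) {s₁ s₂ : ℝ} (hs : 0 ≤ s₁ * s₂) :
    wassersteinDist 2 (P.map fun ω => m₁ + s₁ * X ω) (P.map fun ω => m₂ + s₂ * X ω) =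
      ENNReal.ofReal √((m₁ - m₂ + (s₁ - s₂) * P[X]) ^ 2 + (s₁ - s₂) ^ 2 * Var[X; P]) := by
  have hcov := covariance_add_mul_add_mul_eq_sqrt_mul_sqrt (hX.integrable one_le_two) m₁ m₂ hs
  have hsub (ω : Ω) :
      m₁ + s₁ * X ω - (m₂ + s₂ * X ω) = m₁ - m₂ + (s₁ - s₂) * X ω := by ring
  rw [wassersteinDist_two_map_map_of_covariance_eq (memLp_add_mul hX m₁ s₁)
    (memLp_add_mul hX m₂ s₂) hcov]
  simp only [hsub, integral_sq_add_mul hX]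

end LocationScale

/-- For a location-scale family generated by a base probability measure `ρ` on `ℝ` with
finite second moment, mean `0` and unit second moment: if `μᵢ` is the pushforward of `ρ`
under `x ↦ mᵢ + sᵢ * x` with `sᵢ ≥ 0`, then
`W₂(μ₁, μ₂) = sqrt((m₁ - m₂)² + (s₁ - s₂)²)`. -/
theorem wasserstein2_locationScale
    (ρ : Measure ℝ) (hρ : IsProbabilityMeasure ρ)
    (hmom : ∫⁻ x, ENNReal.ofReal (|x| ^ (2 : ℝ)) ∂ρ < ⊤)
    (hmean : ∫ x, x ∂ρ = 0) (hvar : ∫ x, x ^ 2 ∂ρ = 1)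
    (m₁ m₂ s₁ s₂ : ℝ) (hs₁ : 0 ≤ s₁) (hs₂ : 0 ≤ s₂) :
    wassersteinDist 2 (ρ.map (fun x => m₁ + s₁ * x)) (ρ.map (fun x => m₂ + s₂ * x)) =
      ENNReal.ofReal (Real.sqrt ((m₁ - m₂) ^ 2 + (s₁ - s₂) ^ 2)) := by
  have hvarρ : Var[fun x => x; ρ] = 1 :=
    (variance_of_integral_eq_zero (by fun_prop) hmean).trans hvar
  simpa only [hmean, hvarρ, mul_zero, add_zero, mul_one] using wasserstein2_locationScale_general
    (memLp_two_of_lintegral_abs_rpow_two_lt_top (by fun_prop) hmom) m₁ m₂ (mul_nonneg hs₁ hs₂)
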